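/- Let p be a prime, K = GL₂(ℤ_p), I'_p the Iwahori, J' = [[0,1],[1,0]], and A_n = diag(p^n, p^{-n}) for n ≥ 1. Then the Cartan double coset K A_n K decomposes as the disjoint union of the four Iwahori double cosets I'_p A_n I'_p, I'_p A_n J' I'_p, I'_p J' A_n I'_p, and I'_p J' A_n J' I'_p. -/

import Mathlib

namespace IwahoriAux

open Matrix

variable {p : ℕ} [Fact p.Prime]

/-- Inclusion of integral matrices. -/
def inc (p : ℕ) [Fact p.Prime] : Matrix (Fin 2) (Fin 2) ℤ_[p] → Matrix (Fin 2) (Fin 2) ℚ_[p] :=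
  fun h => h.map (fun x => (x : ℚ_[p]))

lemma inc_mul (a b : Matrix (Fin 2) (Fin 2) ℤ_[p]) : inc p (a * b) = inc p a * inc p b :=
  map_mul (RingHom.mapMatrix (m := Fin 2) (PadicInt.Coe.ringHom (p := p))) a b

lemma inc_inj {a b : Matrix (Fin 2) (Fin 2) ℤ_[p]} (h : inc p a = inc p b) : a = b := by
  ext i j
  have := congrFun (congrFun h i) j
  exact Subtype.ext (by simpa [inc] using this)

/-- Integral Iwahori. -/
def Iw (p : ℕ) [Fact p.Prime] (h : Matrix (Fin 2) (Fin 2) ℤ_[p]) : Prop :=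
  IsUnit h.det ∧ (p : ℤ_[p]) ∣ h 1 0

lemma not_dvd_iff (x : ℤ_[p]) : ¬ (p : ℤ_[p]) ∣ x ↔ IsUnit x := by
  rw [PadicInt.isUnit_iff, ← PadicInt.norm_lt_one_iff_dvd, not_lt]
  exact ⟨fun h => le_antisymm (PadicInt.norm_le_one x) h, fun h => h.ge⟩

lemma p_not_unit : ¬ IsUnit (p : ℤ_[p]) := PadicInt.prime_p.not_isUnit

lemma Iw.mul {a b : Matrix (Fin 2) (Fin 2) ℤ_[p]} (ha : Iw p a) (hb : Iw p b) :
    Iw p (a * b) := by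
  refine ⟨by rw [det_mul]; exact ha.1.mul hb.1, ?_⟩
  rw [mul_apply, Fin.sum_univ_two]
  exact dvd_add (ha.2.mul_right _) (hb.2.mul_left _)

/-- The swap. -/
noncomputable def J (p : ℕ) [Fact p.Prime] : Matrix (Fin 2) (Fin 2) ℤ_[p] := !![0, 1; 1, 0]

/-- Right factorization. -/
lemma right_fact (k : Matrix (Fin 2) (Fin 2) ℤ_[p]) (hk : IsUnit k.det) :
    Iw p k ∨ ∃ x i, Iw p i ∧ k = !![1, x; 0, 1] * J p * i := by
  by_cases h : (p : ℤ_[p]) ∣ k 1 0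
  · exact Or.inl ⟨hk, h⟩
  right
  obtain ⟨u, hu⟩ := (not_dvd_iff _).1 h
  rw [det_fin_two] at hk
  have hc : (↑u⁻¹ : ℤ_[p]) * k 1 0 = 1 := by rw [← hu]; simp
  refine ⟨k 0 0 * ↑u⁻¹, !![k 1 0, k 1 1; 0, k 0 1 - k 0 0 * ↑u⁻¹ * k 1 1], ⟨?_, by simp⟩, ?_⟩
  · rw [det_fin_two]
    convert hk.neg using 1
    simp
    linear_combination (- k 0 0 * k 1 1) * hc
  · ext i j
    fin_cases i <;> fin_cases j <;> simp [J, mul_apply, Fin.sum_univ_two]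
    linear_combination (- k 0 0) * hc

/-- Left factorization. -/
lemma left_fact (k : Matrix (Fin 2) (Fin 2) ℤ_[p]) (hk : IsUnit k.det) :
    ∃ i, Iw p i ∧ (k = i * J p ∨ ∃ x, k = i * !![1, 0; x, 1]) := by
  by_cases h : (p : ℤ_[p]) ∣ k 1 1
  · refine ⟨k * J p, ⟨?_, ?_⟩, Or.inl ?_⟩
    · rw [det_mul]; refine hk.mul ?_; simp [J, det_fin_two]
    · simpa [J, mul_apply, Fin.sum_univ_two] using h
    · rw [mul_assoc]; simp [J, ← one_fin_two]
  obtain ⟨u, hu⟩ := (not_dvd_iff _).1 h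
  rw [det_fin_two] at hk
  have hc : (↑u⁻¹ : ℤ_[p]) * k 1 1 = 1 := by rw [← hu]; simp
  refine ⟨!![k 0 0 - k 0 1 * ↑u⁻¹ * k 1 0, k 0 1; 0, k 1 1], ⟨?_, by simp⟩, Or.inr
    ⟨↑u⁻¹ * k 1 0, ?_⟩⟩
  · rw [det_fin_two]
    convert hk using 1
    simp
    linear_combination (- k 0 1 * k 1 0) * hc
  · ext i j
    fin_cases i <;> fin_cases j <;> simp [mul_apply, Fin.sum_univ_two]
    · ring
    · linear_combination (- k 1 0) * hc

lemma Iw.diag {h : Matrix (Fin 2) (Fin 2) ℤ_[p]} (hh : Iw p h) :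
    PadicInt.toZMod (h 1 0) = 0 ∧ PadicInt.toZMod (h 0 0) ≠ 0 ∧ PadicInt.toZMod (h 1 1) ≠ 0 := by
  have h0 : PadicInt.toZMod (h 1 0) = 0 := by
    obtain ⟨c, hc⟩ := hh.2
    rw [hc]; simp
  have hd := hh.1.map (PadicInt.toZMod (p := p))
  rw [det_fin_two, map_sub, map_mul, map_mul, h0, mul_zero, sub_zero] at hd
  exact ⟨h0, left_ne_zero_of_mul hd.ne_zero, right_ne_zero_of_mul hd.ne_zero⟩

lemma pat_formula (h k : Matrix (Fin 2) (Fin 2) ℤ_[p])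
    (X : Matrix (Fin 2) (Fin 2) ℤ_[p]) (i j : Fin 2) :
    PadicInt.toZMod ((h * X * k) i j) =
      (PadicInt.toZMod (h i 0) * PadicInt.toZMod (X 0 0) +
        PadicInt.toZMod (h i 1) * PadicInt.toZMod (X 1 0)) * PadicInt.toZMod (k 0 j) +
      (PadicInt.toZMod (h i 0) * PadicInt.toZMod (X 0 1) +
        PadicInt.toZMod (h i 1) * PadicInt.toZMod (X 1 1)) * PadicInt.toZMod (k 1 j) := by
  simp [mul_apply, Fin.sum_univ_two]

/-- Double coset of Iwahori in the rational matrices. -/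
def DC (p : ℕ) [Fact p.Prime] (x : Matrix (Fin 2) (Fin 2) ℚ_[p]) :
    Set (Matrix (Fin 2) (Fin 2) ℚ_[p]) :=
  {g | ∃ h, Iw p h ∧ ∃ k, Iw p k ∧ g = inc p h * x * inc p k}

lemma disj {n : ℕ} {x y : Matrix (Fin 2) (Fin 2) ℚ_[p]} (X Y : Matrix (Fin 2) (Fin 2) ℤ_[p])
    (hx : (p : ℚ_[p]) ^ n • x = inc p X) (hy : (p : ℚ_[p]) ^ n • y = inc p Y)
    (hne : ∀ h k h' k', Iw p h → Iw p k → Iw p h' → Iw p k' → h * X * k ≠ h' * Y * k') :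
    Disjoint (DC p x) (DC p y) := by
  rw [Set.disjoint_left]
  rintro g ⟨h, hh, k, hk, rfl⟩ ⟨h', hh', k', hk', e⟩
  refine hne h k h' k' hh hk hh' hk' (inc_inj ?_)
  rw [inc_mul, inc_mul, inc_mul, inc_mul, ← hx, ← hy]
  simp only [smul_mul, Matrix.mul_smul, Matrix.smul_mul]
  rw [e]

/-- Closes the mod `p` comparison from the entries. -/
lemma ne_of {X Y : Matrix (Fin 2) (Fin 2) ℤ_[p]} (i j : Fin 2)
    (hne : ∀ h k h' k', Iw p h → Iw p k → Iw p h' → Iw p k' →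
      PadicInt.toZMod ((h * X * k) i j) ≠ PadicInt.toZMod ((h' * Y * k') i j)) :
    ∀ h k h' k', Iw p h → Iw p k → Iw p h' → Iw p k' → h * X * k ≠ h' * Y * k' := by
  intro h k h' k' h1 h2 h3 h4 e
  exact hne h k h' k' h1 h2 h3 h4 (by rw [e])

end IwahoriAux

open IwahoriAux

/-- The Cartan double coset `K Aₙ K` in `GL₂(ℚ_p)` (`K = GL₂(ℤ_p)`, `Aₙ = diag(pⁿ,p⁻ⁿ)`,
`n ≥ 1`) is the disjoint union of the four Iwahori double cosets
`I Aₙ I`, `I Aₙ J' I`, `I J' Aₙ I`, `I J' Aₙ J' I`. -/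
theorem cartan_eq_four_iwahori (p n : ℕ) [Fact p.Prime] (hn : 1 ≤ n) :
    let ι : Matrix (Fin 2) (Fin 2) ℤ_[p] → Matrix (Fin 2) (Fin 2) ℚ_[p] :=
      fun h => h.map (fun x => (x : ℚ_[p]))
    let K : Set (Matrix (Fin 2) (Fin 2) ℚ_[p]) :=
      {g | ∃ h : Matrix (Fin 2) (Fin 2) ℤ_[p], IsUnit h.det ∧ g = ι h}
    let I : Set (Matrix (Fin 2) (Fin 2) ℚ_[p]) :=
      {g | ∃ h : Matrix (Fin 2) (Fin 2) ℤ_[p],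
        IsUnit h.det ∧ (p : ℤ_[p]) ∣ h 1 0 ∧ g = ι h}
    let A : Matrix (Fin 2) (Fin 2) ℚ_[p] := !![(p:ℚ_[p])^n, 0; 0, ((p:ℚ_[p])^n)⁻¹]
    let J' : Matrix (Fin 2) (Fin 2) ℚ_[p] := !![0, 1; 1, 0]
    let DC : Matrix (Fin 2) (Fin 2) ℚ_[p] → Set (Matrix (Fin 2) (Fin 2) ℚ_[p]) :=
      fun x => {g | ∃ k₁ ∈ I, ∃ k₂ ∈ I, g = k₁ * x * k₂}
    ({g | ∃ k₁ ∈ K, ∃ k₂ ∈ K, g = k₁ * A * k₂}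
        = DC A ∪ DC (A * J') ∪ DC (J' * A) ∪ DC (J' * A * J')) ∧
    Disjoint (DC A) (DC (A * J')) ∧ Disjoint (DC A) (DC (J' * A)) ∧
    Disjoint (DC A) (DC (J' * A * J')) ∧ Disjoint (DC (A * J')) (DC (J' * A)) ∧
    Disjoint (DC (A * J')) (DC (J' * A * J')) ∧
    Disjoint (DC (J' * A)) (DC (J' * A * J')) := by
  intro ι K I A J' DC'
  have hp0 : (p : ℚ_[p]) ≠ 0 := by exact_mod_cast (Fact.out : p.Prime).ne_zero
  have hpn : (p : ℚ_[p]) ^ n ≠ 0 := pow_ne_zero _ hp0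
  have hDC : ∀ x, DC' x = DC p x := by
    intro x
    ext g
    constructor
    · rintro ⟨_, ⟨h, h1, h2, rfl⟩, _, ⟨k, k1, k2, rfl⟩, e⟩
      exact ⟨h, ⟨h1, h2⟩, k, ⟨k1, k2⟩, e⟩
    · rintro ⟨h, ⟨h1, h2⟩, k, ⟨k1, k2⟩, e⟩
      exact ⟨_, ⟨h, h1, h2, rfl⟩, _, ⟨k, k1, k2, rfl⟩, e⟩
  have hJ : J' = inc p (J p) := by
    ext i j
    fin_cases i <;> fin_cases j <;> simp [J, J', inc]
  have hJJ : J' * J' = 1 := by simp [J', ← Matrix.one_fin_two]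
  have hJu : IsUnit (J p).det := by simp [J, Matrix.det_fin_two]
  set q : ℤ_[p] := (p : ℤ_[p]) ^ (2 * n) with hq
  have hpq : (p : ℤ_[p]) ∣ q := dvd_pow_self _ (by omega)
  have hzq : PadicInt.toZMod q = 0 := by
    obtain ⟨c, hc⟩ := hpq
    rw [hc]; simp
  -- commutation relations
  have hL : ∀ x : ℤ_[p], inc p !![1, 0; x, 1] * A = A * inc p !![1, 0; q * x, 1] := by
    intro x
    ext i j
    fin_cases i <;> fin_cases j <;>
      simp [A, inc, q, Matrix.mul_apply, Fin.sum_univ_two]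
    field_simp
    ring
  have hU : ∀ x : ℤ_[p], A * inc p !![1, x; 0, 1] = inc p !![1, q * x; 0, 1] * A := by
    intro x
    ext i j
    fin_cases i <;> fin_cases j <;>
      simp [A, inc, q, Matrix.mul_apply, Fin.sum_univ_two]
    field_simp
    ring
  have hJU : ∀ x : ℤ_[p], J' * inc p !![1, x; 0, 1] = inc p !![1, 0; x, 1] * J' := by
    intro x
    ext i j
    fin_cases i <;> fin_cases j <;>
      simp [J', inc, Matrix.mul_apply, Fin.sum_univ_two]
  have iL : ∀ x : ℤ_[p], Iw p !![1, 0; q * x, 1] := fun x =>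
    ⟨by simp [Matrix.det_fin_two], by simpa using hpq.mul_right x⟩
  have iU : ∀ x : ℤ_[p], Iw p !![1, x; 0, 1] := fun x =>
    ⟨by simp [Matrix.det_fin_two], by simp⟩
  simp only [hDC]
  refine ⟨?_, ?_⟩
  · apply Set.Subset.antisymm
    · rintro g ⟨_, ⟨k₁, hk₁, rfl⟩, _, ⟨k₂, hk₂, rfl⟩, rfl⟩
      change inc p k₁ * A * inc p k₂ ∈ _
      obtain ⟨i, hi, rfl | ⟨x, rfl⟩⟩ := left_fact k₁ hk₁
      · rcases right_fact k₂ hk₂ with h2 | ⟨y, i₂, hi₂, rfl⟩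
        · refine Or.inl (Or.inr ⟨i, hi, k₂, h2, ?_⟩)
          rw [inc_mul, hJ]; simp only [mul_assoc]
        · refine Or.inr ⟨i * !![1, 0; q * y, 1], hi.mul (iL y), i₂, hi₂, ?_⟩
          simp only [inc_mul, ← hJ]
          calc inc p i * J' * A * (inc p !![1, y; 0, 1] * J' * inc p i₂)
              = inc p i * J' * (A * inc p !![1, y; 0, 1]) * J' * inc p i₂ := by
                simp only [mul_assoc]
            _ = inc p i * (J' * inc p !![1, q * y; 0, 1]) * A * J' * inc p i₂ := by
                rw [hU]; simp only [mul_assoc]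
            _ = _ := by rw [hJU]; simp only [mul_assoc]
      · have e : inc p (i * !![1, 0; x, 1]) * A * inc p k₂
            = inc p i * A * inc p (!![1, 0; q * x, 1] * k₂) := by
          rw [inc_mul, inc_mul, mul_assoc (inc p i), hL]; simp only [mul_assoc]
        rw [e]
        have hk : IsUnit (!![1, 0; q * x, 1] * k₂).det := by
          rw [Matrix.det_mul]; exact (iL x).1.mul hk₂
        rcases right_fact _ hk with h2 | ⟨y, i₂, hi₂, e2⟩
        · exact Or.inl (Or.inl (Or.inl ⟨i, hi, _, h2, rfl⟩))
        · refine Or.inl (Or.inl (Or.inr ⟨i * !![1, q * y; 0, 1], hi.mul (iU _), i₂, hi₂, ?_⟩))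
          rw [e2]
          simp only [inc_mul, ← hJ]
          calc inc p i * A * (inc p !![1, y; 0, 1] * J' * inc p i₂)
              = inc p i * (A * inc p !![1, y; 0, 1]) * J' * inc p i₂ := by
                simp only [mul_assoc]
            _ = _ := by rw [hU]; simp only [mul_assoc]
    · have key : ∀ h k : Matrix (Fin 2) (Fin 2) ℤ_[p], IsUnit h.det → IsUnit k.det →
          inc p h * A * inc p k ∈ {g | ∃ k₁ ∈ K, ∃ k₂ ∈ K, g = k₁ * A * k₂} :=
        fun h k hh hk => ⟨_, ⟨h, hh, rfl⟩, _, ⟨k, hk, rfl⟩, rfl⟩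
      rintro g (((⟨h, hh, k, hk, rfl⟩ | ⟨h, hh, k, hk, rfl⟩) | ⟨h, hh, k, hk, rfl⟩) |
        ⟨h, hh, k, hk, rfl⟩)
      · exact key h k hh.1 hk.1
      · convert key h (J p * k) hh.1 (by rw [Matrix.det_mul]; exact hJu.mul hk.1) using 1
        simp only [inc_mul, ← hJ, mul_assoc]
      · convert key (h * J p) k (by rw [Matrix.det_mul]; exact hh.1.mul hJu) hk.1 using 1
        simp only [inc_mul, ← hJ, mul_assoc]
      · convert key (h * J p) (J p * k) (by rw [Matrix.det_mul]; exact hh.1.mul hJu)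
          (by rw [Matrix.det_mul]; exact hJu.mul hk.1) using 1
        simp only [inc_mul, ← hJ, mul_assoc]
  · have e1 : (p : ℚ_[p]) ^ n • A = inc p !![q, 0; 0, 1] := by
      ext i j
      fin_cases i <;> fin_cases j <;> simp [A, inc, q, hp0]
      ring
    have e2 : (p : ℚ_[p]) ^ n • (A * J') = inc p !![0, q; 1, 0] := by
      ext i j
      fin_cases i <;> fin_cases j <;> simp [A, J', inc, q, hp0]
      ring
    have e3 : (p : ℚ_[p]) ^ n • (J' * A) = inc p !![0, 1; q, 0] := by
      ext i j
      fin_cases i <;> fin_cases j <;> simp [A, J', inc, q, hp0]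
      ring
    have e4 : (p : ℚ_[p]) ^ n • (J' * A * J') = inc p !![1, 0; 0, q] := by
      ext i j
      fin_cases i <;> fin_cases j <;> simp [A, J', inc, q, hp0]
      ring
    refine ⟨disj _ _ e1 e2 (ne_of 1 0 ?_), disj _ _ e1 e3 (ne_of 1 1 ?_),
      disj _ _ e1 e4 (ne_of 0 0 ?_), disj _ _ e2 e3 (ne_of 1 0 ?_),
      disj _ _ e2 e4 (ne_of 1 0 ?_), disj _ _ e3 e4 (ne_of 0 0 ?_)⟩ <;>
    · intro h k h' k' h1 h2 h3 h4
      obtain ⟨a1, a2, a3⟩ := h1.diag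
      obtain ⟨b1, b2, b3⟩ := h2.diag
      obtain ⟨c1, c2, c3⟩ := h3.diag
      obtain ⟨d1, d2, d3⟩ := h4.diag
      rw [pat_formula, pat_formula]
      simp [hzq, a1, a2, a3, b1, b2, b3, c1, c2, c3, d1, d2, d3, eq_comm]
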